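/- arXiv:2403.03033 — 2 statements merged into one kernel-verified Lean document; each statement's English description precedes it below -/
import Mathlib

section
/- Let d ≥ 1, ℓ ∈ ℝ, let v₁,…,v_n ∈ ℤ^d be distinct and set D := ⋃_{i=1}^n B_{v_i}, equipped with the stratification consisting of all open faces of the cubes B_{v_1},…,B_{v_n}, and let g, p : ℝ^d → ℝ be C² functions. If the pair (g,p) is locally topologically stable at level ℓ on each cube B_{v_i} (i.e. for every t ∈ [0,1] the function g + tp has no stratified critical point at level ℓ in B_{v_i}), then there exists a stratified isotopy H of D such that H({x ∈ D : g(x) ≥ ℓ}, t) = {x ∈ D : g(x) + t·p(x) ≥ ℓ} for every t ∈ [0,1], and H(·,0) is the identity map on D. -/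
open MeasureTheory Filter Set Topology Metric
open scoped ENNReal NNReal

noncomputable section

/-- `ℝ^d` as Euclidean space. -/
abbrev Euc (d : ℕ) := EuclideanSpace ℝ (Fin d)

/-- The closed unit cube `B_v = v + [0,1]^d`. -/
def unitCube (d : ℕ) (v : Fin d → ℤ) : Set (Euc d) :=
  {x | ∀ i, (v i : ℝ) ≤ x i ∧ x i ≤ (v i : ℝ) + 1}

/-- The open face of the cube `B_v` described by `s`: `some false ↦ {v i}`,
`some true ↦ {v i + 1}`, `none ↦ (v i, v i + 1)`. -/
def openFace (d : ℕ) (v : Fin d → ℤ) (s : Fin d → Option Bool) : Set (Euc d) :=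
  {x | ∀ i, match s i with
    | some false => x i = (v i : ℝ)
    | some true => x i = (v i : ℝ) + 1
    | none => (v i : ℝ) < x i ∧ x i < (v i : ℝ) + 1}

/-- `x` is a stratified critical point of `h` in the cube `B_v` at level `ℓ`. -/
def IsStratCrit (d : ℕ) (h : Euc d → ℝ) (v : Fin d → ℤ) (ℓ : ℝ) (x : Euc d) : Prop :=
  ∃ s : Fin d → Option Bool, x ∈ openFace d v s ∧ h x = ℓ ∧
    ∀ i, s i = none → fderiv ℝ h x (EuclideanSpace.single i 1) = 0

/-- `(g,p)` is locally topologically stable on `B_v` at level `ℓ`. -/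
def LocStable (d : ℕ) (g p : Euc d → ℝ) (v : Fin d → ℤ) (ℓ : ℝ) : Prop :=
  ∀ t ∈ Set.Icc (0:ℝ) 1, ∀ x : Euc d, ¬ IsStratCrit d (fun y => g y + t * p y) v ℓ x

/-- Union of the unbounded connected components of `A`. -/
def unboundedPart (d : ℕ) (A : Set (Euc d)) : Set (Euc d) :=
  {x | x ∈ A ∧ ¬ Bornology.IsBounded (connectedComponentIn A x)}

/-- Union of the bounded connected components of `A`. -/
def boundedPart (d : ℕ) (A : Set (Euc d)) : Set (Euc d) :=
  A \ unboundedPart d A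

/-- The locally unstable set `U_Loc(g,p)` at level `ℓ`. -/
def ULoc (d : ℕ) (g p : Euc d → ℝ) (ℓ : ℝ) : Set (Fin d → ℤ) :=
  {w | ¬ LocStable d g p w ℓ}

/-- The finite-range unstable set `U_FR(g,p)` at level `ℓ`. -/
def UFR (d : ℕ) (g p : Euc d → ℝ) (ℓ : ℝ) : Set (Fin d → ℤ) :=
  ULoc d g p ℓ ∪
    {w | ∃ u ∈ ULoc d g p ℓ,
      (∃ x ∈ unitCube d w, ∃ y ∈ unitCube d u,
        JoinedIn (boundedPart d {z | ℓ ≤ g z}) x y) ∨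
      (∃ x ∈ unitCube d w, ∃ y ∈ unitCube d u,
        JoinedIn (boundedPart d {z | ℓ ≤ g z + p z}) x y)}

/-- `A` has at most finitely many connected components. -/
def FinitelyManyComponents (d : ℕ) (A : Set (Euc d)) : Prop :=
  {C : Set (Euc d) | ∃ x ∈ A, C = connectedComponentIn A x}.Finite

/-- `H` is a stratified isotopy of the union `D` of the cubes `B_{v i}`:
it is continuous on `D × [0,1]`, each time slice is a homeomorphism of `D`
onto itself, and each stratum (open face) is preserved at every time. -/
def IsStratIsotopy (d n : ℕ) (v : Fin n → Fin d → ℤ) (H : Euc d → ℝ → Euc d) : Prop :=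
  ContinuousOn (fun q : Euc d × ℝ => H q.1 q.2) ((⋃ i, unitCube d (v i)) ×ˢ Set.Icc 0 1) ∧
  (∀ t ∈ Set.Icc (0:ℝ) 1,
    ∃ e : (⋃ i, unitCube d (v i)) ≃ₜ (⋃ i, unitCube d (v i)),
      ∀ x : (⋃ i, unitCube d (v i)), (e x : Euc d) = H x t) ∧
  (∀ t ∈ Set.Icc (0:ℝ) 1, ∀ i : Fin n, ∀ s : Fin d → Option Bool,
    (fun x => H x t) '' openFace d (v i) s = openFace d (v i) s)

/-- The cube `Λ_r = [-r,r]^d`. -/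
def bigCube (d : ℕ) (r : ℝ) : Set (Euc d) :=
  {x | ∀ i, |x i| ≤ r}

/-- If `|φ'| ≤ C |φ|` on an interval, then `φ` has constant sign there: positivity at one point
propagates to the whole interval. -/
theorem pos_of_abs_deriv_le_mul_abs {φ φ' : ℝ → ℝ} {C a b : ℝ}
    (hφ : ∀ t ∈ Icc a b, HasDerivAt φ (φ' t) t)
    (hC : ∀ t ∈ Icc a b, |φ' t| ≤ C * |φ t|) {s t : ℝ} (hs : s ∈ Icc a b) (ht : t ∈ Icc a b)
    (hpos : 0 < φ s) : 0 < φ t := by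
  have hcont : ContinuousOn φ (Icc a b) := fun u hu => (hφ u hu).continuousAt.continuousWithinAt
  have hderiv : ∀ k : ℝ, ∀ u ∈ Icc a b, HasDerivAt (fun u => φ u ^ 2 * Real.exp (k * u))
      ((2 * (φ u * φ' u) + k * φ u ^ 2) * Real.exp (k * u)) u := by
    intro k u hu
    have h1 := ((hφ u hu).pow 2).mul (((hasDerivAt_id u).const_mul k).exp)
    refine h1.congr_deriv ?_
    simp
    ring
  have hprod : ∀ u ∈ Icc a b, |φ u * φ' u| ≤ C * φ u ^ 2 := by
    intro u hu
    rw [abs_mul, ← sq_abs (φ u)]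
    nlinarith [hC u hu, abs_nonneg (φ u)]
  have hmono : MonotoneOn (fun u => φ u ^ 2 * Real.exp (2 * C * u)) (Icc a b) := by
    refine monotoneOn_of_deriv_nonneg (convex_Icc a b)
      (fun u hu => (hderiv _ u hu).continuousAt.continuousWithinAt)
      (fun u hu => (hderiv _ u (interior_subset hu)).differentiableAt.differentiableWithinAt) ?_
    intro u hu
    rw [(hderiv _ u (interior_subset hu)).deriv]
    have := abs_le.1 (hprod u (interior_subset hu))
    exact mul_nonneg (by linarith [this.1]) (Real.exp_pos _).le
  have hanti : AntitoneOn (fun u => φ u ^ 2 * Real.exp (-(2 * C) * u)) (Icc a b) := by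
    refine antitoneOn_of_deriv_nonpos (convex_Icc a b)
      (fun u hu => (hderiv _ u hu).continuousAt.continuousWithinAt)
      (fun u hu => (hderiv _ u (interior_subset hu)).differentiableAt.differentiableWithinAt) ?_
    intro u hu
    rw [(hderiv _ u (interior_subset hu)).deriv]
    have := abs_le.1 (hprod u (interior_subset hu))
    exact mul_nonpos_of_nonpos_of_nonneg (by linarith [this.2]) (Real.exp_pos _).le
  have hne : ∀ u ∈ Icc a b, φ u ≠ 0 := by
    intro u hu h0
    rcases le_total s u with h | h
    · have := hmono hs hu h
      simp only [h0] at this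
      have h2 := mul_pos (pow_pos hpos 2) (Real.exp_pos (2 * C * s))
      linarith
    · have := hanti hu hs h
      simp only [h0] at this
      have h2 := mul_pos (pow_pos hpos 2) (Real.exp_pos (-(2 * C) * s))
      linarith
  by_contra hneg
  obtain ⟨u, hu, hu0⟩ := isPreconnected_Icc.intermediate_value ht hs hcont
    ⟨not_lt.1 hneg, hpos.le⟩
  exact hne u hu hu0

section Flow

variable {E : Type*} [NormedAddCommGroup E] [NormedSpace ℝ E]

/-- A bounded Lipschitz time-dependent vector field has, on any ball and for any starting time in
`[0,1]`, a jointly continuous flow over a neighbourhood of `[0,1]`. -/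
theorem exists_continuousOn_flow [CompleteSpace E] {V : ℝ × E → E} {K M : ℝ≥0}
    (hK : LipschitzWith K V) (hM : ∀ z, ‖V z‖ ≤ M) {t₀ : ℝ} (ht₀ : t₀ ∈ Icc (0 : ℝ) 1) (x₀ : E)
    (r : ℝ≥0) :
    ∃ α : E × ℝ → E, (∀ x ∈ closedBall x₀ r, α (x, t₀) = x ∧
      ∀ t ∈ Ioo (-1 : ℝ) 2, HasDerivAt (fun t => α (x, t)) (V (t, α (x, t))) t) ∧
      ContinuousOn α (closedBall x₀ r ×ˢ Icc 0 1) := by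
  have hPL : IsPicardLindelof (fun t x => V (t, x)) (tmin := -1) (tmax := 2)
      ⟨t₀, by constructor <;> linarith [ht₀.1, ht₀.2]⟩ x₀ (r + M * 2) r M K := by
    refine ⟨fun t _ => ?_, fun x _ => ?_, fun t _ x _ => hM _, ?_⟩
    · have := hK.comp (LipschitzWith.prodMk_left t)
      rw [mul_one] at this
      exact this.lipschitzOnWith
    · exact (hK.continuous.comp (by fun_prop)).continuousOn
    · have h2 : max (2 - t₀) (t₀ - -1) ≤ 2 := max_le (by linarith [ht₀.1]) (by linarith [ht₀.2])
      push_cast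
      nlinarith [M.coe_nonneg]
  obtain ⟨α, h1, h2⟩ := hPL.exists_forall_mem_closedBall_eq_hasDerivWithinAt_continuousOn
  refine ⟨α, fun x hx => ⟨(h1 x hx).1, fun t ht => ?_⟩, h2.mono ?_⟩
  · exact ((h1 x hx).2 t (Ioo_subset_Icc_self ht)).hasDerivAt (Icc_mem_nhds ht.1 ht.2)
  · exact prod_mono subset_rfl (Icc_subset_Icc (by norm_num) (by norm_num))

theorem eqOn_of_hasDerivAt_of_lipschitzWith {V : ℝ × E → E} {K : ℝ≥0}
    (hK : LipschitzWith K V) {β γ : ℝ → E}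
    (hβ : ∀ t ∈ Ioo (-1 : ℝ) 2, HasDerivAt β (V (t, β t)) t)
    (hγ : ∀ t ∈ Ioo (-1 : ℝ) 2, HasDerivAt γ (V (t, γ t)) t)
    {t₀ : ℝ} (ht₀ : t₀ ∈ Icc (0 : ℝ) 1) (h : β t₀ = γ t₀) : EqOn β γ (Icc 0 1) := by
  have hv : ∀ t, LipschitzWith K (fun x => V (t, x)) := fun t => by
    have := hK.comp (LipschitzWith.prodMk_left t)
    rwa [mul_one] at this
  refine (ODE_solution_unique_of_mem_Ioo (v := fun t x => V (t, x)) (s := fun _ => univ)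
    (fun t _ => (hv t).lipschitzOnWith) (t₀ := t₀) ⟨by linarith [ht₀.1], by linarith [ht₀.2]⟩
    (fun t ht => ⟨hβ t ht, trivial⟩) (fun t ht => ⟨hγ t ht, trivial⟩) h).mono ?_
  exact fun t ht => ⟨by linarith [ht.1], by linarith [ht.2]⟩

end Flow

theorem isCompact_unitCube (d : ℕ) (v : Fin d → ℤ) : IsCompact (unitCube d v) := by
  have h : unitCube d v = (EuclideanSpace.equiv (Fin d) ℝ).toHomeomorph ⁻¹'
      Icc (fun i => (v i : ℝ)) (fun i => (v i : ℝ) + 1) := by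
    ext x
    simp only [unitCube, mem_ofPred_eq, mem_preimage, mem_Icc, Pi.le_def, ← forall_and]
    rfl
  rw [h, Homeomorph.isCompact_preimage]
  exact isCompact_Icc

theorem openFace_subset_unitCube (d : ℕ) (v : Fin d → ℤ) (s : Fin d → Option Bool) :
    openFace d v s ⊆ unitCube d v := by
  intro x hx i
  have := hx i
  split at this
  · constructor <;> linarith
  · constructor <;> linarith
  · exact ⟨this.1.le, this.2.le⟩

theorem exists_mem_openFace {d : ℕ} {v : Fin d → ℤ} {x : Euc d} (hx : x ∈ unitCube d v) :
    ∃ s, x ∈ openFace d v s := by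
  classical
  refine ⟨fun i => if x i = v i then some false else if x i = v i + 1 then some true else none,
    fun i => ?_⟩
  have := hx i
  by_cases h0 : x i = v i
  · simp [h0]
  · by_cases h1 : x i = v i + 1
    · simp [h1]
    · simp only [h0, h1, if_false]
      exact ⟨lt_of_le_of_ne this.1 (Ne.symm h0), lt_of_le_of_ne this.2 h1⟩

theorem sin_pi_mul_ne_zero_of_int_lt_of_lt {x : ℝ} {m : ℤ} (h0 : (m : ℝ) < x) (h1 : x < m + 1) :
    Real.sin (Real.pi * x) ≠ 0 := by
  intro h
  obtain ⟨k, hk⟩ := Real.sin_eq_zero_iff.1 h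
  have hk' : (k : ℝ) = x := mul_right_cancel₀ Real.pi_ne_zero (by rw [hk, mul_comm])
  rw [← hk'] at h0 h1
  have h2 : m < k := by exact_mod_cast h0
  have h3 : k < m + 1 := by exact_mod_cast h1
  omega

theorem clm_apply_eq_sum_single {d : ℕ} (L : Euc d →L[ℝ] ℝ) (x : Euc d) :
    L x = ∑ i, x i * L (EuclideanSpace.single i 1) := by
  conv_lhs => rw [← (EuclideanSpace.basisFun (Fin d) ℝ).sum_repr x]
  simp [map_sum]

/-- On a cube where `(g,p)` is stable, the level set of `g + tp` carries no point at which all the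
partial derivatives, weighted by `sin² (π x_i)`, vanish. -/
theorem LocStable.sq_add_sum_pos {d : ℕ} {g p : Euc d → ℝ} {v : Fin d → ℤ} {ℓ : ℝ}
    (h : LocStable d g p v ℓ) (hg : Differentiable ℝ g) (hp : Differentiable ℝ p)
    {t : ℝ} (ht : t ∈ Icc (0 : ℝ) 1) {x : Euc d} (hx : x ∈ unitCube d v) :
    0 < (g x + t * p x - ℓ) ^ 2 + ∑ i, (Real.sin (Real.pi * x i) *
      (fderiv ℝ g x (EuclideanSpace.single i 1) +
        t * fderiv ℝ p x (EuclideanSpace.single i 1))) ^ 2 := by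
  have hS : 0 ≤ ∑ i, (Real.sin (Real.pi * x i) * (fderiv ℝ g x (EuclideanSpace.single i 1) +
      t * fderiv ℝ p x (EuclideanSpace.single i 1))) ^ 2 :=
    Finset.sum_nonneg fun i _ => sq_nonneg _
  refine lt_of_le_of_ne (add_nonneg (sq_nonneg _) hS) fun h0 => ?_
  obtain ⟨hf, hsum⟩ := (add_eq_zero_iff_of_nonneg (sq_nonneg _) hS).1 h0.symm
  rw [Finset.sum_eq_zero_iff_of_nonneg fun i _ => sq_nonneg _] at hsum
  obtain ⟨s, hs⟩ := exists_mem_openFace hx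
  refine h t ht x ⟨s, hs, by linarith [(pow_eq_zero_iff two_ne_zero).1 hf], fun i hi => ?_⟩
  have hsi := hs i
  rw [hi] at hsi
  have hd : HasFDerivAt (fun y => g y + t * p y) (fderiv ℝ g x + t • fderiv ℝ p x) x :=
    (hg x).hasFDerivAt.add ((hp x).hasFDerivAt.const_mul t)
  rw [hd.fderiv]
  have := (pow_eq_zero_iff two_ne_zero).1 (hsum i (Finset.mem_univ i))
  simpa using (mul_eq_zero.1 this).resolve_left (sin_pi_mul_ne_zero_of_int_lt_of_lt hsi.1 hsi.2)

/-- A bounded Lipschitz vector field tangent to all faces of the integer lattice and along whose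
flow `g + tp - ℓ` satisfies a linear differential equation as long as the flow stays in `D`. -/
theorem exists_tangent_vectorField {d n : ℕ} {ℓ : ℝ} {v : Fin n → Fin d → ℤ} {g p : Euc d → ℝ}
    (hg : ContDiff ℝ 2 g) (hp : ContDiff ℝ 2 p) (hstable : ∀ i : Fin n, LocStable d g p (v i) ℓ) :
    ∃ (V : ℝ × Euc d → Euc d) (K M : ℝ≥0) (c : ℝ × Euc d → ℝ),
      LipschitzWith K V ∧ (∀ z, ‖V z‖ ≤ M) ∧
      (∀ (t : ℝ) (x : Euc d) (i : Fin d) (m : ℤ), x i = m → V (t, x) i = 0) ∧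
      Continuous c ∧
      ∀ t ∈ Icc (0 : ℝ) 1, ∀ x ∈ ⋃ i, unitCube d (v i),
        p x + (fderiv ℝ g x + t • fderiv ℝ p x) (V (t, x)) = c (t, x) * (g x + t * p x - ℓ) := by
  set A : Set (ℝ × Euc d) := Icc (0 : ℝ) 1 ×ˢ ⋃ i, unitCube d (v i) with hA
  have hAc : IsCompact A :=
    isCompact_Icc.prod (isCompact_iUnion fun i => isCompact_unitCube d (v i))
  obtain ⟨η, hηsupp, hη, hηrange⟩ :=
    (hAc.isClosed.isOpen_compl).exists_contDiff_support_eq (n := 1)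
  obtain ⟨R, hR0, hR⟩ := hAc.isBounded.exists_pos_norm_le
  let χ : ContDiffBump (0 : ℝ × Euc d) := ⟨R, R + 1, hR0, by linarith⟩
  let f : ℝ × Euc d → ℝ := fun z => g z.2 + z.1 * p z.2 - ℓ
  let D : Fin d → ℝ × Euc d → ℝ := fun i z => fderiv ℝ g z.2 (EuclideanSpace.single i 1) +
        z.1 * fderiv ℝ p z.2 (EuclideanSpace.single i 1)
  let Q : ℝ × Euc d → ℝ := fun z =>
    f z ^ 2 + ∑ i, (Real.sin (Real.pi * z.2 i) * D i z) ^ 2 + η z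
  have hg1 : ContDiff ℝ 1 g := hg.of_le (by norm_num)
  have hp1 : ContDiff ℝ 1 p := hp.of_le (by norm_num)
  have hg' : ContDiff ℝ 1 (fderiv ℝ g) := hg.fderiv_right (by norm_num)
  have hp' : ContDiff ℝ 1 (fderiv ℝ p) := hp.fderiv_right (by norm_num)
  have hf : ContDiff ℝ 1 f := by fun_prop
  have hD : ∀ i, ContDiff ℝ 1 (D i) := fun i => by fun_prop
  have hx : ∀ i, ContDiff ℝ 1 (fun z : ℝ × Euc d => z.2 i) := fun i =>
    (contDiff_euclidean.1 contDiff_snd) i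
  have hsin : ∀ i, ContDiff ℝ 1 (fun z : ℝ × Euc d => Real.sin (Real.pi * z.2 i)) := fun i =>
    (contDiff_const.mul (hx i)).sin
  have hQ : ContDiff ℝ 1 Q :=
    ((hf.pow 2).add (ContDiff.sum fun i _ => ((hsin i).mul (hD i)).pow 2)).add hη
  have hQpos : ∀ z, 0 < Q z := by
    intro z
    have hS : 0 ≤ ∑ i, (Real.sin (Real.pi * z.2 i) * D i z) ^ 2 :=
      Finset.sum_nonneg fun i _ => sq_nonneg _
    have hη0 : 0 ≤ η z := (hηrange (mem_range_self z)).1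
    by_cases hz : z ∈ A
    · obtain ⟨i, hi⟩ := mem_iUnion.1 hz.2
      have := (hstable i).sq_add_sum_pos (hg1.differentiable one_ne_zero)
        (hp1.differentiable one_ne_zero) hz.1 hi
      exact add_pos_of_pos_of_nonneg this hη0
    · have : η z ≠ 0 := by
        rw [← Function.mem_support, hηsupp]
        exact hz
      have h3 : 0 < η z := lt_of_le_of_ne hη0 this.symm
      exact add_pos_of_nonneg_of_pos (add_nonneg (sq_nonneg _) hS) h3
  let V : ℝ × Euc d → Euc d := fun z => χ z • WithLp.toLp 2 fun i =>
    -(Real.sin (Real.pi * z.2 i) ^ 2 * D i z * p z.2 / Q z)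
  have hV : ContDiff ℝ 1 V := by
    refine χ.contDiff.smul (contDiff_euclidean.2 fun i => ?_)
    exact (((((hsin i).pow 2).mul (hD i)).mul (hp1.comp contDiff_snd)).div hQ
      fun z => (hQpos z).ne').neg
  have hVc : HasCompactSupport V := χ.hasCompactSupport.smul_right
  obtain ⟨K, hK⟩ := hV.lipschitzWith_of_hasCompactSupport hVc one_ne_zero
  obtain ⟨M, hM⟩ := hVc.exists_bound_of_continuous hV.continuous
  refine ⟨V, K, M.toNNReal, fun z => p z.2 * f z / Q z, hK,
    fun z => (hM z).trans (Real.le_coe_toNNReal M), ?_, ?_, ?_⟩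
  · intro t x i m hxi
    have : Real.sin (Real.pi * x i) = 0 := by
      rw [hxi, mul_comm]
      exact Real.sin_int_mul_pi m
    simp [V, this]
  · exact ((hp1.continuous.comp continuous_snd).mul hf.continuous).div hQ.continuous
      fun z => (hQpos z).ne'
  · intro t ht x hxD
    have hz : (t, x) ∈ A := ⟨ht, hxD⟩
    have hχ : χ (t, x) = 1 := χ.one_of_mem_closedBall (by
      simpa [mem_closedBall, dist_zero_right] using hR _ hz)
    have hη0 : η (t, x) = 0 := by
      rw [← Function.notMem_support, hηsupp]
      exact fun h => h hz
    have hsum : (fderiv ℝ g x + t • fderiv ℝ p x) (V (t, x)) =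
        -(p x / Q (t, x) * ∑ i, (Real.sin (Real.pi * x i) * D i (t, x)) ^ 2) := by
      rw [clm_apply_eq_sum_single, Finset.mul_sum, ← Finset.sum_neg_distrib]
      refine Finset.sum_congr rfl fun i _ => ?_
      simp only [V, hχ, one_smul, D, add_apply, smul_apply,
        smul_eq_mul]
      ring
    have hQe : ∑ i, (Real.sin (Real.pi * x i) * D i (t, x)) ^ 2 =
        Q (t, x) - f (t, x) ^ 2 := by
      simp only [Q, hη0]
      ring
    have hQ0 := (hQpos (t, x)).ne'
    rw [hsum, hQe]
    change _ = p x * f (t, x) / Q (t, x) * f (t, x)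
    field_simp
    ring

section Trajectory

variable {d : ℕ} {V : ℝ × Euc d → Euc d} {K : ℝ≥0} {γ : ℝ → Euc d}

theorem hasDerivAt_apply {γ' : Euc d} {t : ℝ} (h : HasDerivAt γ γ' t) (i : Fin d) :
    HasDerivAt (fun t => γ t i) (γ' i) t :=
  (EuclideanSpace.proj (𝕜 := ℝ) i).hasFDerivAt.comp_hasDerivAt t h

theorem trajectory_integer_order (hK : LipschitzWith K V)
    (hV : ∀ (t : ℝ) (x : Euc d) (i : Fin d) (m : ℤ), x i = m → V (t, x) i = 0)
    (hγ : ∀ t ∈ Icc (0 : ℝ) 1, HasDerivAt γ (V (t, γ t)) t) {s t : ℝ}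
    (hs : s ∈ Icc (0 : ℝ) 1) (ht : t ∈ Icc (0 : ℝ) 1) (i : Fin d) (m : ℤ) :
    ((m : ℝ) < γ s i → (m : ℝ) < γ t i) ∧ (γ s i < m → γ t i < m) := by
  have hbound : ∀ u x, |V (u, x) i| ≤ K * |x i - m| := by
    intro u x
    set y : Euc d := x + EuclideanSpace.single i (m - x i) with hy
    have h1 : V (u, y) i = 0 := hV u y i m (by simp [hy])
    calc |V (u, x) i| = ‖(V (u, x) - V (u, y)) i‖ := by simp [h1]
      _ ≤ ‖V (u, x) - V (u, y)‖ := PiLp.norm_apply_le _ i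
      _ ≤ K * ‖(u, x) - (u, y)‖ := hK.norm_sub_le _ _
      _ = K * |x i - m| := by
        rw [Prod.mk_sub_mk, sub_self, Prod.norm_mk, norm_zero, hy, sub_add_cancel_left, norm_neg,
          PiLp.norm_single, Real.norm_eq_abs, abs_sub_comm, max_eq_right (abs_nonneg _)]
  constructor <;> intro h
  · have := pos_of_abs_deriv_le_mul_abs (φ := fun u => γ u i - m) (C := K)
      (fun u hu => (hasDerivAt_apply (hγ u hu) i).sub_const _) (fun u _ => hbound u (γ u)) hs ht
      (sub_pos.2 h)
    exact sub_pos.1 this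
  · have := pos_of_abs_deriv_le_mul_abs (φ := fun u => m - γ u i) (C := K)
      (fun u hu => (hasDerivAt_apply (hγ u hu) i).const_sub _)
      (fun u _ => by simpa [abs_sub_comm] using hbound u (γ u)) hs ht (sub_pos.2 h)
    exact sub_pos.1 this

theorem trajectory_mem_openFace (hK : LipschitzWith K V)
    (hV : ∀ (t : ℝ) (x : Euc d) (i : Fin d) (m : ℤ), x i = m → V (t, x) i = 0)
    (hγ : ∀ t ∈ Icc (0 : ℝ) 1, HasDerivAt γ (V (t, γ t)) t) {s t : ℝ}
    (hs : s ∈ Icc (0 : ℝ) 1) (ht : t ∈ Icc (0 : ℝ) 1) {v : Fin d → ℤ} {σ : Fin d → Option Bool}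
    (h : γ s ∈ openFace d v σ) : γ t ∈ openFace d v σ := by
  have hord := fun i m => trajectory_integer_order hK hV hγ hs ht i m
  have hord' := fun i m => trajectory_integer_order hK hV hγ ht hs i m
  have heq : ∀ i (m : ℤ), γ s i = m → γ t i = m := fun i m hm =>
    le_antisymm (not_lt.1 fun h' => ((hord' i m).1 h').ne' hm)
      (not_lt.1 fun h' => ((hord' i m).2 h').ne hm)
  intro i
  have hi := h i
  have h1 := hord i (v i + 1)
  have h2 := heq i (v i + 1)
  push_cast at h1 h2
  split at hi
  · exact heq i _ hi
  · exact h2 hi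
  · exact ⟨(hord i _).1 hi.1, h1.2 hi.2⟩

theorem trajectory_mem_iUnion_unitCube {n : ℕ} (hK : LipschitzWith K V)
    (hV : ∀ (t : ℝ) (x : Euc d) (i : Fin d) (m : ℤ), x i = m → V (t, x) i = 0)
    (hγ : ∀ t ∈ Icc (0 : ℝ) 1, HasDerivAt γ (V (t, γ t)) t) {s t : ℝ}
    (hs : s ∈ Icc (0 : ℝ) 1) (ht : t ∈ Icc (0 : ℝ) 1) {v : Fin n → Fin d → ℤ}
    (h : γ s ∈ ⋃ i, unitCube d (v i)) : γ t ∈ ⋃ i, unitCube d (v i) := by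
  obtain ⟨i, hi⟩ := mem_iUnion.1 h
  obtain ⟨σ, hσ⟩ := exists_mem_openFace hi
  exact mem_iUnion.2 ⟨i, openFace_subset_unitCube _ _ _
    (trajectory_mem_openFace hK hV hγ hs ht hσ)⟩

theorem trajectory_superlevel {g p : Euc d → ℝ} (hg : Differentiable ℝ g)
    (hp : Differentiable ℝ p) {ℓ : ℝ} {c : ℝ × Euc d → ℝ} (hc : Continuous c)
    (hγ : ∀ t ∈ Icc (0 : ℝ) 1, HasDerivAt γ (V (t, γ t)) t)
    (hlin : ∀ t ∈ Icc (0 : ℝ) 1, p (γ t) + (fderiv ℝ g (γ t) + t • fderiv ℝ p (γ t)) (V (t, γ t)) =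
      c (t, γ t) * (g (γ t) + t * p (γ t) - ℓ)) {s t : ℝ}
    (hs : s ∈ Icc (0 : ℝ) 1) (ht : t ∈ Icc (0 : ℝ) 1) (h : ℓ ≤ g (γ s) + s * p (γ s)) :
    ℓ ≤ g (γ t) + t * p (γ t) := by
  have hcont : ContinuousOn (fun t => c (t, γ t)) (Icc 0 1) :=
    hc.comp_continuousOn (continuousOn_id.prodMk
      fun u hu => (hγ u hu).continuousAt.continuousWithinAt)
  obtain ⟨C, hC⟩ := isCompact_Icc.exists_bound_of_continuousOn hcont
  have hderiv : ∀ u ∈ Icc (0 : ℝ) 1, HasDerivAt (fun u => ℓ - (g (γ u) + u * p (γ u)))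
      (-(c (u, γ u) * (g (γ u) + u * p (γ u) - ℓ))) u := by
    intro u hu
    have h1 := (hg (γ u)).hasFDerivAt.comp_hasDerivAt u (hγ u hu)
    have h2 := (hasDerivAt_id u).mul ((hp (γ u)).hasFDerivAt.comp_hasDerivAt u (hγ u hu))
    refine ((h1.add h2).const_sub ℓ).congr_deriv ?_
    rw [← hlin u hu]
    simp
    ring
  by_contra hlt
  have := pos_of_abs_deriv_le_mul_abs (C := C) hderiv (fun u hu => ?_) ht hs
    (sub_pos.2 (not_le.1 hlt))
  · linarith
  · rw [abs_neg, abs_mul, abs_sub_comm ℓ]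
    exact mul_le_mul_of_nonneg_right (hC u hu) (abs_nonneg _)

end Trajectory

/-- If `(g,p)` is locally topologically stable at level `ℓ` on each of the
distinct unit cubes `B_{v i}`, then there is a stratified isotopy `H` of `D = ⋃ B_{v i}`
carrying `{g ≥ ℓ} ∩ D` onto `{g + tp ≥ ℓ} ∩ D` for every `t ∈ [0,1]`, starting at the
identity. -/
theorem statement_1 (d n : ℕ) (hd : 1 ≤ d) (ℓ : ℝ)
    (v : Fin n → Fin d → ℤ) (hv : Function.Injective v)
    (g p : Euc d → ℝ) (hg : ContDiff ℝ 2 g) (hp : ContDiff ℝ 2 p)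
    (hstable : ∀ i : Fin n, LocStable d g p (v i) ℓ) :
    ∃ H : Euc d → ℝ → Euc d, IsStratIsotopy d n v H ∧
      (∀ t ∈ Set.Icc (0:ℝ) 1,
        (fun x => H x t) '' ({x | ℓ ≤ g x} ∩ ⋃ i, unitCube d (v i)) =
          {x | ℓ ≤ g x + t * p x} ∩ ⋃ i, unitCube d (v i)) ∧
      (∀ x ∈ ⋃ i, unitCube d (v i), H x 0 = x) := by
  obtain ⟨V, K, M, c, hK, hM, hV, hc, hlin⟩ := exists_tangent_vectorField hg hp hstable
  set D : Set (Euc d) := ⋃ i, unitCube d (v i) with hD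
  have hDc : IsCompact D := isCompact_iUnion fun i => isCompact_unitCube d (v i)
  obtain ⟨R, hR0, hR⟩ := hDc.isBounded.exists_pos_norm_le
  have hball : D ⊆ closedBall 0 (R.toNNReal : ℝ) := fun x hx => by
    simpa using (hR x hx).trans (Real.le_coe_toNNReal R)
  have h0 : (0 : ℝ) ∈ Icc (0 : ℝ) 1 := ⟨le_rfl, zero_le_one⟩
  have hsub : Icc (0 : ℝ) 1 ⊆ Ioo (-1) 2 :=
    fun t ht => ⟨by linarith [ht.1], by linarith [ht.2]⟩
  obtain ⟨α, hα, hαc⟩ := exists_continuousOn_flow hK hM h0 0 R.toNNReal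
  have hαd : ∀ x ∈ D, ∀ t ∈ Icc (0 : ℝ) 1,
      HasDerivAt (fun t => α (x, t)) (V (t, α (x, t))) t :=
    fun x hx t ht => (hα x (hball hx)).2 t (hsub ht)
  have hα0 : ∀ x ∈ D, α (x, 0) = x := fun x hx => (hα x (hball hx)).1
  have hαD : ∀ x ∈ D, ∀ t ∈ Icc (0 : ℝ) 1, α (x, t) ∈ D := fun x hx t ht =>
    trajectory_mem_iUnion_unitCube hK hV (hαd x hx) h0 ht (by rwa [hα0 x hx])
  have hface : ∀ t ∈ Icc (0 : ℝ) 1, ∀ i s x, x ∈ D →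
      (α (x, t) ∈ openFace d (v i) s ↔ x ∈ openFace d (v i) s) := by
    intro t ht i s x hx
    refine ⟨fun h => ?_, fun h => ?_⟩
    · rw [← hα0 x hx]
      exact trajectory_mem_openFace hK hV (hαd x hx) ht h0 h
    · exact trajectory_mem_openFace hK hV (hαd x hx) h0 ht (by rwa [hα0 x hx])
  have hlevel : ∀ t ∈ Icc (0 : ℝ) 1, ∀ x ∈ D,
      (ℓ ≤ g (α (x, t)) + t * p (α (x, t)) ↔ ℓ ≤ g x) := by
    intro t ht x hx
    have key : ∀ a ∈ Icc (0 : ℝ) 1, ∀ b ∈ Icc (0 : ℝ) 1,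
        ℓ ≤ g (α (x, a)) + a * p (α (x, a)) → ℓ ≤ g (α (x, b)) + b * p (α (x, b)) :=
      fun a ha b hb => trajectory_superlevel (hg.differentiable two_ne_zero)
        (hp.differentiable two_ne_zero) hc (hαd x hx)
        (fun u hu => hlin u hu _ (hαD x hx u hu)) ha hb
    have h1 := key t ht 0 h0
    have h2 := key 0 h0 t ht
    rw [hα0 x hx, zero_mul, add_zero] at h1 h2
    exact ⟨h1, h2⟩
  have hsurj : ∀ t ∈ Icc (0 : ℝ) 1, ∀ y ∈ D, ∃ x ∈ D, α (x, t) = y := by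
    intro t ht y hy
    obtain ⟨β, hβ, -⟩ := exists_continuousOn_flow hK hM ht 0 R.toNNReal
    obtain ⟨hβt, hβd⟩ := hβ y (hball hy)
    have hx : β (y, 0) ∈ D := trajectory_mem_iUnion_unitCube hK hV (γ := fun t => β (y, t))
      (fun u hu => hβd u (hsub hu)) ht h0 (by rwa [hβt])
    refine ⟨β (y, 0), hx, ?_⟩
    have := eqOn_of_hasDerivAt_of_lipschitzWith hK (hα _ (hball hx)).2 hβd h0
      (hα0 _ hx) ht
    exact this.trans hβt
  have hinj : ∀ t ∈ Icc (0 : ℝ) 1, ∀ x ∈ D, ∀ y ∈ D, α (x, t) = α (y, t) → x = y := by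
    intro t ht x hx y hy hxy
    have := eqOn_of_hasDerivAt_of_lipschitzWith hK (hα _ (hball hx)).2 (hα _ (hball hy)).2 ht hxy h0
    simpa only [hα0 x hx, hα0 y hy] using this
  have hcont : ContinuousOn α (D ×ˢ Icc 0 1) := hαc.mono (prod_mono hball subset_rfl)
  refine ⟨fun x t => α (x, t), ⟨hcont, fun t ht => ?_, fun t ht i s => ?_⟩, fun t ht => ?_, hα0⟩
  · have : CompactSpace D := isCompact_iff_compactSpace.1 hDc
    let φ : D → D := fun x => ⟨α (x, t), hαD x x.2 t ht⟩
    have hφ : Continuous φ := Continuous.subtype_mk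
      (hcont.comp_continuous (f := fun x : D => ((x : Euc d), t)) (by fun_prop)
        fun x => ⟨x.2, ht⟩) _
    have hbij : Function.Bijective φ :=
      ⟨fun x y hxy => Subtype.ext (hinj t ht x x.2 y y.2 (congrArg Subtype.val hxy)),
        fun y => let ⟨x, hx, hxy⟩ := hsurj t ht y y.2; ⟨⟨x, hx⟩, Subtype.ext hxy⟩⟩
    exact ⟨Continuous.homeoOfEquivCompactToT2 (f := Equiv.ofBijective φ hbij) hφ, fun x => rfl⟩
  · have hFD : openFace d (v i) s ⊆ D :=
      (openFace_subset_unitCube _ _ _).trans (subset_iUnion (fun i => unitCube d (v i)) i)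
    refine Subset.antisymm ?_ fun y hy => ?_
    · rintro _ ⟨x, hx, rfl⟩
      exact (hface t ht i s x (hFD hx)).2 hx
    · obtain ⟨x, hx, rfl⟩ := hsurj t ht y (hFD hy)
      exact ⟨x, (hface t ht i s x hx).1 hy, rfl⟩
  · refine Subset.antisymm ?_ fun y hy => ?_
    · rintro _ ⟨x, hx, rfl⟩
      exact ⟨(hlevel t ht x hx.2).2 hx.1, hαD x hx.2 t ht⟩
    · obtain ⟨x, hx, rfl⟩ := hsurj t ht y hy.2
      exact ⟨x, ⟨(hlevel t ht x hx).1 hy.1, hx⟩, rfl⟩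

end
end

section
/- For every d ≥ 1 there exists a constant C_d ≥ 20, depending only on d, with the following property. Let B := B_w = w + [0,1]^d be a unit cube, ℓ ∈ ℝ, let g, p : ℝ^d → ℝ be C², and let A₁ ∈ (0,1), A₂ ≥ 1 and A₀ ∈ (0, A₁²/(C_d·A₂)) satisfy: |∇g(x)| > A₁ for every x ∈ B with g(x) = ℓ; ‖∇²g(x)‖ < A₂ for every x ∈ B; sup_{x∈B} max(|p(x)|, |∇p(x)|) < A₀; and p(x) = 0 for every x ∈ B with dist(x, ∂B) ≤ 2A₀/A₁. Then there exist a relatively open neighbourhood V of {g = ℓ} ∩ B in B on which ∇g does not vanish, and an injective C¹ map φ : V → B, such that for every x ∈ V there is a real number r_x with |r_x| ≤ 2A₀/A₁, φ(x) = x + r_x·∇g(x)/|∇g(x)|, and (g + p)(φ(x)) = g(x). -/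
open MeasureTheory Filter Set Topology Metric
open scoped ENNReal NNReal

noncomputable section

theorem ball_infDist_frontier_subset_interior {E : Type*} [NormedAddCommGroup E]
    [NormedSpace ℝ E] {B : Set E} (hB : IsClosed B) {x : E} (hx : x ∈ B) :
    ball x (infDist x (frontier B)) ⊆ interior B := by
  rcases (infDist_nonneg (x := x) (s := frontier B)).eq_or_lt with h0 | hpos
  · simp [← h0]
  have hdisj : ∀ z ∈ ball x (infDist x (frontier B)), z ∉ frontier B := fun z hz hzf =>
    absurd (infDist_le_dist_of_mem (x := x) hzf) (not_le.2 (mem_ball'.1 hz))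
  have hmem : ∀ z ∈ B, z ∉ frontier B → z ∈ interior B := fun z hz hzf => by
    by_contra hzi
    exact hzf ⟨subset_closure hz, hzi⟩
  refine (convex_ball x _).isPreconnected.subset_left_of_subset_union isOpen_interior
    hB.isOpen_compl (disjoint_compl_right.mono_left interior_subset) (fun z hz => ?_)
    ⟨x, mem_ball_self hpos, hmem x hx (hdisj x (mem_ball_self hpos))⟩
  by_cases hzB : z ∈ B
  · exact Or.inl (hmem z hzB (hdisj z hz))
  · exact Or.inr hzB

theorem abs_sub_sub_fderiv_le_of_norm_sub_le {E : Type*} [NormedAddCommGroup E] [NormedSpace ℝ E]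
    {B : Set E} (hB : Convex ℝ B) {f : E → ℝ} (hf : ContDiff ℝ 2 f) {K R : ℝ} (hK : 0 ≤ K)
    (hbound : ∀ x ∈ B, ‖fderiv ℝ (fderiv ℝ f) x‖ ≤ K) {x a b : E} (hx : x ∈ B) (ha : a ∈ B)
    (hb : b ∈ B) (hax : ‖a - x‖ ≤ R) (hbx : ‖b - x‖ ≤ R) :
    |f b - f a - fderiv ℝ f x (b - a)| ≤ K * R * ‖b - a‖ := by
  have hf' : Differentiable ℝ (fderiv ℝ f) :=
    (hf.fderiv_right (m := 1) le_rfl).differentiable one_ne_zero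
  refine (hB.inter (convex_closedBall x R)).norm_image_sub_le_of_norm_fderiv_le'
    (fun z _ => hf.differentiable two_ne_zero z) (fun z hz => ?_)
    ⟨ha, mem_closedBall_iff_norm.2 hax⟩ ⟨hb, mem_closedBall_iff_norm.2 hbx⟩
  calc ‖fderiv ℝ f z - fderiv ℝ f x‖ ≤ K * ‖z - x‖ :=
        hB.norm_image_sub_le_of_norm_fderiv_le (fun z _ => hf' z) hbound hx hz.1
    _ ≤ K * R := by gcongr; exact mem_closedBall_iff_norm.1 hz.2

section UnitNormal

variable {E : Type*} [NormedAddCommGroup E] [InnerProductSpace ℝ E] [CompleteSpace E]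

/-- The unit normal `∇g / |∇g|` to the level sets of `g`. -/
def unitNormal (g : E → ℝ) (x : E) : E := ‖gradient g x‖⁻¹ • gradient g x

theorem fderiv_eq_inner_gradient (g : E → ℝ) (x v : E) :
    fderiv ℝ g x v = inner ℝ (gradient g x) v := by
  rw [← toDual_gradient, InnerProductSpace.toDual_apply_apply]

theorem norm_gradient_sub_gradient (g : E → ℝ) (x y : E) :
    ‖gradient g x - gradient g y‖ = ‖fderiv ℝ g x - fderiv ℝ g y‖ := by
  rw [gradient, gradient, ← map_sub, LinearIsometryEquiv.norm_map]

theorem norm_gradient (g : E → ℝ) (x : E) : ‖gradient g x‖ = ‖fderiv ℝ g x‖ := by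
  rw [gradient, LinearIsometryEquiv.norm_map]

theorem contDiff_gradient {g : E → ℝ} (hg : ContDiff ℝ 2 g) : ContDiff ℝ 1 (gradient g) :=
  (InnerProductSpace.toDual ℝ E).symm.contDiff.comp (hg.fderiv_right (m := 1) le_rfl)

theorem contDiffAt_unitNormal {g : E → ℝ} (hg : ContDiff ℝ 2 g) {x : E}
    (hx : gradient g x ≠ 0) : ContDiffAt ℝ 1 (unitNormal g) x :=
  have h := (contDiff_gradient hg).contDiffAt (x := x)
  ((h.norm ℝ hx).inv (norm_ne_zero_iff.2 hx)).smul h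

theorem norm_unitNormal {g : E → ℝ} {x : E} (hx : gradient g x ≠ 0) : ‖unitNormal g x‖ = 1 :=
  norm_smul_inv_norm hx

theorem norm_smul_unitNormal {g : E → ℝ} {x : E} (hx : gradient g x ≠ 0) (r : ℝ) :
    ‖r • unitNormal g x‖ = |r| := by
  rw [norm_smul, norm_unitNormal hx, mul_one, Real.norm_eq_abs]

theorem norm_gradient_smul_unitNormal {g : E → ℝ} {x : E} (hx : gradient g x ≠ 0) :
    ‖gradient g x‖ • unitNormal g x = gradient g x :=
  smul_inv_smul₀ (norm_ne_zero_iff.2 hx) _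

theorem fderiv_unitNormal {g : E → ℝ} {x : E} (hx : gradient g x ≠ 0) :
    fderiv ℝ g x (unitNormal g x) = ‖gradient g x‖ := by
  rw [fderiv_eq_inner_gradient, unitNormal, real_inner_smul_right, real_inner_self_eq_norm_sq]
  field_simp [norm_ne_zero_iff.2 hx]

theorem norm_gradient_mul_norm_unitNormal_sub_le {g : E → ℝ} {x y : E} (hx : gradient g x ≠ 0)
    (hy : gradient g y ≠ 0) :
    ‖gradient g y‖ * ‖unitNormal g x - unitNormal g y‖ ≤ 2 * ‖gradient g x - gradient g y‖ := by
  have key : ‖gradient g y‖ • (unitNormal g x - unitNormal g y) =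
      (‖gradient g y‖ - ‖gradient g x‖) • unitNormal g x + (gradient g x - gradient g y) := by
    rw [smul_sub, sub_smul, norm_gradient_smul_unitNormal hx, norm_gradient_smul_unitNormal hy]
    abel
  have h1 : |‖gradient g y‖ - ‖gradient g x‖| ≤ ‖gradient g x - gradient g y‖ := by
    rw [norm_sub_rev]
    exact abs_norm_sub_norm_le _ _
  calc ‖gradient g y‖ * ‖unitNormal g x - unitNormal g y‖
      = ‖‖gradient g y‖ • (unitNormal g x - unitNormal g y)‖ := by rw [norm_smul, norm_norm]
    _ ≤ ‖(‖gradient g y‖ - ‖gradient g x‖) • unitNormal g x‖ + ‖gradient g x - gradient g y‖ := by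
        rw [key]
        exact norm_add_le _ _
    _ ≤ 2 * ‖gradient g x - gradient g y‖ := by
        rw [norm_smul_unitNormal hx]
        linarith

variable {B : Set E} {g p : E → ℝ} {A₀ A₁ K R : ℝ}

theorem le_sub_along_unitNormal (hB : Convex ℝ B) (hg : ContDiff ℝ 2 g) (hK : 0 ≤ K)
    (hbound : ∀ x ∈ B, ‖fderiv ℝ (fderiv ℝ g) x‖ ≤ K) (hA₁ : 0 < A₁) {x : E} (hx : x ∈ B)
    (hgx : A₁ < ‖gradient g x‖) {s t : ℝ} (hst : s ≤ t) (hs : |s| ≤ R) (ht : |t| ≤ R)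
    (hsB : x + s • unitNormal g x ∈ B) (htB : x + t • unitNormal g x ∈ B) :
    (A₁ - K * R) * (t - s) ≤ g (x + t • unitNormal g x) - g (x + s • unitNormal g x) := by
  have hx0 : gradient g x ≠ 0 := norm_pos_iff.1 (hA₁.trans hgx)
  have h := abs_sub_sub_fderiv_le_of_norm_sub_le (R := R) hB hg hK hbound hx hsB htB
    (by rwa [add_sub_cancel_left, norm_smul_unitNormal hx0])
    (by rwa [add_sub_cancel_left, norm_smul_unitNormal hx0])
  have hsub : x + t • unitNormal g x - (x + s • unitNormal g x) = (t - s) • unitNormal g x := by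
    rw [sub_smul]
    abel
  rw [hsub, map_smul, smul_eq_mul, fderiv_unitNormal hx0, norm_smul_unitNormal hx0,
    abs_of_nonneg (sub_nonneg.2 hst)] at h
  nlinarith [neg_le_of_abs_le h, mul_le_mul_of_nonneg_right hgx.le (sub_nonneg.2 hst)]

theorem le_add_sub_along_unitNormal (hB : Convex ℝ B) (hg : ContDiff ℝ 2 g)
    (hp : Differentiable ℝ p) (hK : 0 ≤ K)
    (hbound : ∀ x ∈ B, ‖fderiv ℝ (fderiv ℝ g) x‖ ≤ K) (hp' : ∀ x ∈ B, ‖fderiv ℝ p x‖ ≤ A₀)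
    (hA₁ : 0 < A₁) {x : E} (hx : x ∈ B)
    (hgx : A₁ < ‖gradient g x‖) {s t : ℝ} (hst : s ≤ t) (hs : |s| ≤ R) (ht : |t| ≤ R)
    (hsB : x + s • unitNormal g x ∈ B) (htB : x + t • unitNormal g x ∈ B) :
    (A₁ - K * R - A₀) * (t - s) ≤
      (g + p) (x + t • unitNormal g x) - (g + p) (x + s • unitNormal g x) := by
  have hx0 : gradient g x ≠ 0 := norm_pos_iff.1 (hA₁.trans hgx)
  have h1 := le_sub_along_unitNormal hB hg hK hbound hA₁ hx hgx hst hs ht hsB htB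
  have h2 := hB.norm_image_sub_le_of_norm_fderiv_le (fun z _ => hp z) hp' hsB htB
  rw [add_sub_add_left_eq_sub, ← sub_smul, norm_smul_unitNormal hx0,
    abs_of_nonneg (sub_nonneg.2 hst), Real.norm_eq_abs] at h2
  simp only [Pi.add_apply]
  linarith [neg_le_of_abs_le h2]

theorem eq_of_add_smul_unitNormal_eq (hB : Convex ℝ B) (hg : ContDiff ℝ 2 g) (hK : 0 ≤ K)
    (hbound : ∀ x ∈ B, ‖fderiv ℝ (fderiv ℝ g) x‖ ≤ K) (hA₁ : 0 < A₁) (hKR : K * R ≤ A₁ / 10)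
    {x y : E} (hx : x ∈ B) (hy : y ∈ B) (hgx : A₁ < ‖gradient g x‖) (hgy : A₁ < ‖gradient g y‖)
    (hxy : g x = g y) {r s : ℝ} (hr : |r| ≤ R) (hs : |s| ≤ R)
    (heq : x + r • unitNormal g x = y + s • unitNormal g y) : x = y := by
  have hx0 : gradient g x ≠ 0 := norm_pos_iff.1 (hA₁.trans hgx)
  have hy0 : gradient g y ≠ 0 := norm_pos_iff.1 (hA₁.trans hgy)
  have hR : 0 ≤ R := (abs_nonneg r).trans hr
  have hf' : Differentiable ℝ (fderiv ℝ g) :=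
    (hg.fderiv_right (m := 1) le_rfl).differentiable one_ne_zero
  set v := unitNormal g x - unitNormal g y with hv
  have hsub : x - y = (s - r) • unitNormal g y - r • v := by
    rw [eq_sub_of_add_eq heq, hv, sub_smul, smul_sub]
    abel
  have hxyR : ‖x - y‖ ≤ 2 * R := by
    have : x - y = s • unitNormal g y - r • unitNormal g x :=
      sub_eq_sub_iff_add_eq_add.2 (heq.trans (add_comm _ _))
    rw [this]
    refine (norm_sub_le _ _).trans ?_
    rw [norm_smul_unitNormal hx0, norm_smul_unitNormal hy0]
    linarith
  have hgrad : ‖gradient g x - gradient g y‖ ≤ K * ‖x - y‖ := by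
    rw [norm_gradient_sub_gradient]
    exact hB.norm_image_sub_le_of_norm_fderiv_le (fun z _ => hf' z) hbound hy hx
  have hnv := norm_gradient_mul_norm_unitNormal_sub_le hx0 hy0
  rw [← hv] at hnv
  have hRv : R * ‖v‖ ≤ ‖x - y‖ / 5 := by
    have h1 : A₁ * ‖v‖ ≤ 2 * (K * ‖x - y‖) := by
      nlinarith [mul_le_mul_of_nonneg_right hgy.le (norm_nonneg v)]
    have h2 : A₁ * (R * ‖v‖) ≤ A₁ * (‖x - y‖ / 5) := by
      nlinarith [mul_le_mul_of_nonneg_left h1 hR,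
        mul_le_mul_of_nonneg_right hKR (norm_nonneg (x - y))]
    exact le_of_mul_le_mul_left h2 hA₁
  have hrv : ‖r • v‖ ≤ ‖x - y‖ / 5 := by
    rw [norm_smul, Real.norm_eq_abs]
    exact (mul_le_mul_of_nonneg_right hr (norm_nonneg v)).trans hRv
  have hsr : 4 / 5 * ‖x - y‖ ≤ |s - r| := by
    have := norm_sub_le ((s - r) • unitNormal g y) (r • v)
    rw [← hsub, norm_smul_unitNormal hy0] at this
    linarith
  have htaylor := abs_sub_sub_fderiv_le_of_norm_sub_le (R := 2 * R) hB hg hK hbound hy hy hx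
    (by simpa using hR) hxyR
  rw [hxy, sub_self, zero_sub, abs_neg] at htaylor
  have hlower : ‖gradient g y‖ * (3 / 5 * ‖x - y‖) ≤ |fderiv ℝ g y (x - y)| := by
    have h1 : |fderiv ℝ g y (r • v)| ≤ ‖gradient g y‖ * (‖x - y‖ / 5) := by
      rw [norm_gradient]
      exact ((fderiv ℝ g y).le_opNorm _).trans (by gcongr)
    have h2 : |fderiv ℝ g y ((s - r) • unitNormal g y)| = ‖gradient g y‖ * |s - r| := by
      rw [map_smul, fderiv_unitNormal hy0, smul_eq_mul, abs_mul, abs_norm, mul_comm]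
    have h3 := abs_sub_abs_le_abs_sub (fderiv ℝ g y ((s - r) • unitNormal g y))
      (fderiv ℝ g y (r • v))
    rw [← map_sub, ← hsub] at h3
    nlinarith [mul_le_mul_of_nonneg_left hsr (norm_nonneg (gradient g y))]
  have hfin : A₁ * (2 / 5 * ‖x - y‖) ≤ 0 := by
    nlinarith [mul_le_mul_of_nonneg_right hgy.le (norm_nonneg (x - y)),
      mul_le_mul_of_nonneg_right hKR (norm_nonneg (x - y))]
  have : ‖x - y‖ ≤ 0 := by nlinarith
  exact sub_eq_zero.1 (norm_le_zero_iff.1 this)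

theorem exists_root_along_unitNormal (hBc : IsClosed B) (hB : Convex ℝ B) (hg : ContDiff ℝ 2 g)
    (hp : Continuous p) (hK : 0 ≤ K)
    (hbound : ∀ x ∈ B, ‖fderiv ℝ (fderiv ℝ g) x‖ ≤ K) (hA₁ : 0 < A₁)
    (hR : 0 ≤ R) (hKR : K * R ≤ A₁ / 10) (hA₀ : A₁ * R = 2 * A₀) (hp0 : ∀ x ∈ B, |p x| ≤ A₀)
    (hpf : ∀ x ∈ B, infDist x (frontier B) ≤ R → p x = 0)
    {x : E} (hx : x ∈ B) (hgx : A₁ < ‖gradient g x‖) :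
    ∃ r : ℝ, |r| ≤ R ∧ x + r • unitNormal g x ∈ B ∧ (g + p) (x + r • unitNormal g x) = g x := by
  have hx0 : gradient g x ≠ 0 := norm_pos_iff.1 (hA₁.trans hgx)
  rcases le_or_gt (infDist x (frontier B)) R with h | h
  · exact ⟨0, by simpa using hR, by simpa using hx, by simpa using hpf x hx h⟩
  have hmem : ∀ r : ℝ, |r| ≤ R → x + r • unitNormal g x ∈ B := fun r hr =>
    interior_subset (ball_infDist_frontier_subset_interior hBc hx (by
      rw [mem_ball_iff_norm, add_sub_cancel_left, norm_smul_unitNormal hx0]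
      exact hr.trans_lt h))
  have hR' : |R| ≤ R := (abs_of_nonneg hR).le
  have hRn : |-R| ≤ R := by rwa [abs_neg]
  have h0 : |(0 : ℝ)| ≤ R := by simpa using hR
  have hup := le_sub_along_unitNormal hB hg hK hbound hA₁ hx hgx hR h0 hR' (hmem _ h0) (hmem _ hR')
  have hdown := le_sub_along_unitNormal hB hg hK hbound hA₁ hx hgx (neg_nonpos.2 hR) hRn h0
    (hmem _ hRn) (hmem _ h0)
  have hKRR := mul_le_mul_of_nonneg_right hKR hR
  have hA₀' : 0 ≤ A₀ := (abs_nonneg _).trans (hp0 x hx)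
  have hcont : Continuous fun r : ℝ => (g + p) (x + r • unitNormal g x) :=
    (hg.continuous.add hp).comp (by fun_prop)
  obtain ⟨r, hr, hr'⟩ := intermediate_value_Icc (neg_le_self hR) hcont.continuousOn
    (show g x ∈ _ by
      simp only [zero_smul, add_zero] at hup hdown
      have h1 := (abs_le.1 (hp0 _ (hmem _ hR'))).1
      have h2 := (abs_le.1 (hp0 _ (hmem _ hRn))).2
      constructor <;> simp only [Pi.add_apply] <;> nlinarith)
  exact ⟨r, abs_le.2 hr, hmem r (abs_le.2 hr), hr'⟩

theorem exists_contDiffAt_root_along_unitNormal {h : E → ℝ} (hg : ContDiff ℝ 2 g)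
    (hh : ContDiff ℝ 1 h) {x : E} (hx : gradient g x ≠ 0) {r : ℝ}
    (hr : h (x + r • unitNormal g x) = g x)
    (hderiv : fderiv ℝ h (x + r • unitNormal g x) (unitNormal g x) ≠ 0) :
    ∃ ψ : E → ℝ, ContDiffAt ℝ 1 ψ x ∧ ψ x = r ∧
      ∀ᶠ y in 𝓝 x, h (y + ψ y • unitNormal g y) = g y := by
  let F : E × ℝ → ℝ := fun q => h (q.1 + q.2 • unitNormal g q.1) - g q.1
  have hF : ContDiffAt ℝ 1 F (x, r) := by
    have hn : ContDiffAt ℝ 1 (fun q : E × ℝ => unitNormal g q.1) (x, r) :=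
      (contDiffAt_unitNormal hg hx).comp (x, r) contDiffAt_fst
    have hg1 : ContDiff ℝ 1 g := hg.of_le one_le_two
    exact (hh.contDiffAt.comp (x, r) (contDiffAt_fst.add (contDiffAt_snd.smul hn))).sub
      (hg1.contDiffAt.comp (x, r) contDiffAt_fst)
  have hpartial : (fderiv ℝ F (x, r) ∘L .inr ℝ E ℝ) 1 =
      fderiv ℝ h (x + r • unitNormal g x) (unitNormal g x) := by
    have h1 : HasDerivAt (fun s : ℝ => F (x, s)) (fderiv ℝ F (x, r) (0, 1)) r :=
      (hF.differentiableAt one_ne_zero).hasFDerivAt.comp_hasDerivAt r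
        ((hasDerivAt_const r x).prodMk (hasDerivAt_id r))
    have h2 : HasDerivAt (fun s : ℝ => F (x, s))
        (fderiv ℝ h (x + r • unitNormal g x) (unitNormal g x)) r := by
      have := ((hasDerivAt_id r).smul_const (unitNormal g x)).const_add x
      rw [one_smul] at this
      exact ((hh.differentiable one_ne_zero (x + r • unitNormal g x)).hasFDerivAt.comp_hasDerivAt r
        this).sub_const (g x)
    simpa using h1.unique h2
  have hinv : (fderiv ℝ F (x, r) ∘L .inr ℝ E ℝ).IsInvertible := by
    refine ⟨ContinuousLinearEquiv.unitsEquivAut ℝ (Units.mk0 _ (hpartial ▸ hderiv)), ?_⟩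
    ext
    simp
  refine ⟨hF.implicitFunction one_ne_zero hinv, hF.contDiffAt_implicitFunction one_ne_zero hinv,
    hF.implicitFunction_apply_self one_ne_zero hinv, ?_⟩
  filter_upwards [hF.eventually_apply_implicitFunction one_ne_zero hinv] with y hy
  simpa [F, hr, sub_eq_zero] using hy

theorem root_along_unitNormal_unique (hB : Convex ℝ B) (hg : ContDiff ℝ 2 g)
    (hp : Differentiable ℝ p) (hK : 0 ≤ K)
    (hbound : ∀ x ∈ B, ‖fderiv ℝ (fderiv ℝ g) x‖ ≤ K) (hp' : ∀ x ∈ B, ‖fderiv ℝ p x‖ ≤ A₀)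
    (hA₁ : 0 < A₁) (hpos : 0 < A₁ - K * R - A₀) {x : E} (hx : x ∈ B)
    (hgx : A₁ < ‖gradient g x‖) {s t : ℝ} (hs : |s| ≤ R) (ht : |t| ≤ R)
    (hsB : x + s • unitNormal g x ∈ B) (htB : x + t • unitNormal g x ∈ B)
    (heq : (g + p) (x + s • unitNormal g x) = (g + p) (x + t • unitNormal g x)) : s = t := by
  wlog hst : s ≤ t generalizing s t
  · exact (this ht hs htB hsB heq.symm (le_of_not_ge hst)).symm
  have h := le_add_sub_along_unitNormal hB hg hp hK hbound hp' hA₁ hx hgx hst hs ht hsB htB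
  rw [heq, sub_self] at h
  exact le_antisymm hst (sub_nonpos.1 (nonpos_of_mul_nonpos_right h hpos))

theorem contDiffOn_root_along_unitNormal (hBc : IsClosed B) (hB : Convex ℝ B)
    (hg : ContDiff ℝ 2 g) (hp : ContDiff ℝ 1 p) (hK : 0 ≤ K)
    (hbound : ∀ x ∈ B, ‖fderiv ℝ (fderiv ℝ g) x‖ ≤ K) (hp' : ∀ x ∈ B, ‖fderiv ℝ p x‖ ≤ A₀)
    (hA₁ : 0 < A₁) (hR : 0 < R) (hA₀ : A₁ * R = 2 * A₀) (hKR : K * R ≤ A₁ / 10)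
    (hA₀' : A₀ ≤ A₁ / 20) (hp0 : ∀ x ∈ B, |p x| ≤ A₀)
    (hpf : ∀ x ∈ B, infDist x (frontier B) ≤ R → p x = 0) {ρ : E → ℝ}
    (hρ : ∀ x ∈ B, A₁ < ‖gradient g x‖ → |ρ x| ≤ R ∧ x + ρ x • unitNormal g x ∈ B ∧
      (g + p) (x + ρ x • unitNormal g x) = g x) :
    ContDiffOn ℝ 1 ρ ({x | A₁ < ‖gradient g x‖} ∩ B) := by
  have hpos : 0 < A₁ - K * R - A₀ := by linarith
  have huniq : ∀ y ∈ B, A₁ < ‖gradient g y‖ → ∀ s, |s| ≤ R → y + s • unitNormal g y ∈ B →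
      (g + p) (y + s • unitNormal g y) = g y → ρ y = s := fun y hy hgy s hs hsB hsy =>
    have h := hρ y hy hgy
    root_along_unitNormal_unique hB hg (hp.differentiable one_ne_zero) hK hbound hp' hA₁ hpos hy
      hgy h.1 hs h.2.1 hsB (h.2.2.trans hsy.symm)
  rintro x ⟨hgx : A₁ < ‖gradient g x‖, hx⟩
  have hx0 : gradient g x ≠ 0 := norm_pos_iff.1 (hA₁.trans hgx)
  have hzero : ∀ y ∈ B, A₁ < ‖gradient g y‖ → infDist y (frontier B) ≤ R → ρ y = 0 :=
    fun y hy hgy h => huniq y hy hgy 0 (by simpa using hR.le) (by simpa using hy)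
      (by simpa using hpf y hy h)
  rcases lt_or_ge (infDist x (frontier B)) R with h | h
  · have hev : ∀ᶠ y in 𝓝 x, infDist y (frontier B) < R :=
      (continuous_infDist_pt _).continuousAt.eventually_lt_const h
    refine (contDiffWithinAt_const (c := (0 : ℝ))).congr_of_eventuallyEq ?_
      (hzero x hx hgx h.le)
    filter_upwards [self_mem_nhdsWithin, mem_nhdsWithin_of_mem_nhds hev] with y hy hyR
    exact hzero y hy.2 hy.1 hyR.le
  obtain ⟨hρR, hρB, hρx⟩ := hρ x hx hgx
  have hlt : |ρ x| < R := by
    have h0 : |(0 : ℝ)| ≤ R := by simpa using hR.le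
    have hxB : x + (0 : ℝ) • unitNormal g x ∈ B := by simpa using hx
    have hpb := abs_le.1 (hp0 _ hρB)
    simp only [Pi.add_apply] at hρx
    have hA : A₁ * (9 / 10 * |ρ x|) ≤ A₀ := by
      rcases le_total 0 (ρ x) with h' | h'
      · have := le_sub_along_unitNormal hB hg hK hbound hA₁ hx hgx h' h0 hρR hxB hρB
        rw [zero_smul, add_zero] at this
        rw [abs_of_nonneg h']
        nlinarith [mul_le_mul_of_nonneg_right hKR h']
      · have := le_sub_along_unitNormal hB hg hK hbound hA₁ hx hgx h' hρR h0 hρB hxB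
        rw [zero_smul, add_zero] at this
        rw [abs_of_nonpos h']
        nlinarith [mul_le_mul_of_nonneg_right hKR (neg_nonneg.2 h')]
    refine lt_of_mul_lt_mul_left (?_ : A₁ * |ρ x| < A₁ * R) hA₁.le
    nlinarith [mul_pos hA₁ hR]
  have hint : x + ρ x • unitNormal g x ∈ interior B :=
    ball_infDist_frontier_subset_interior hBc hx (by
      rw [mem_ball_iff_norm, add_sub_cancel_left, norm_smul_unitNormal hx0]
      exact hlt.trans_le h)
  have hderiv : fderiv ℝ (g + p) (x + ρ x • unitNormal g x) (unitNormal g x) ≠ 0 := by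
    have hf' : Differentiable ℝ (fderiv ℝ g) :=
      (hg.fderiv_right (m := 1) le_rfl).differentiable one_ne_zero
    rw [fderiv_add (hg.differentiable two_ne_zero _) (hp.differentiable one_ne_zero _),
      add_apply]
    have h1 := hB.norm_image_sub_le_of_norm_fderiv_le (fun z _ => hf' z) hbound hx hρB
    rw [add_sub_cancel_left, norm_smul_unitNormal hx0] at h1
    have h2 := (fderiv ℝ g (x + ρ x • unitNormal g x) - fderiv ℝ g x).le_opNorm (unitNormal g x)
    have h3 := (fderiv ℝ p (x + ρ x • unitNormal g x)).le_opNorm (unitNormal g x)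
    rw [norm_unitNormal hx0, mul_one, Real.norm_eq_abs] at h2 h3
    rw [sub_apply, fderiv_unitNormal hx0] at h2
    have h4 := hp' _ hρB
    have h5 := mul_le_mul_of_nonneg_left hρR hK
    have h6 := neg_le_of_abs_le h2
    have h7 := neg_le_of_abs_le h3
    exact ne_of_gt (by linarith)
  obtain ⟨ψ, hψ, hψx, hψy⟩ := exists_contDiffAt_root_along_unitNormal hg
    ((hg.of_le one_le_two).add hp) hx0 hρx hderiv
  refine hψ.contDiffWithinAt.congr_of_eventuallyEq ?_ hψx.symm
  have hψR : ∀ᶠ y in 𝓝 x, |ψ y| < R :=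
    hψ.continuousAt.abs.eventually_lt_const (by simpa only [hψx] using hlt)
  have hψB : ∀ᶠ y in 𝓝 x, y + ψ y • unitNormal g y ∈ interior B := by
    have hc : ContinuousAt (fun y => y + ψ y • unitNormal g y) x :=
      continuousAt_id.add (hψ.continuousAt.smul (contDiffAt_unitNormal hg hx0).continuousAt)
    exact hc.eventually_mem (isOpen_interior.mem_nhds (by rwa [hψx]))
  filter_upwards [self_mem_nhdsWithin, mem_nhdsWithin_of_mem_nhds hψR,
    mem_nhdsWithin_of_mem_nhds hψB, mem_nhdsWithin_of_mem_nhds hψy] with y hy hyR hyB hyψ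
  exact huniq y hy.2 hy.1 _ hyR.le (interior_subset hyB) hyψ

end UnitNormal

theorem convex_unitCube (d : ℕ) (v : Fin d → ℤ) : Convex ℝ (unitCube d v) := by
  intro x hx y hy a b ha hb hab i
  simp only [PiLp.add_apply, PiLp.smul_apply, smul_eq_mul]
  obtain rfl : b = 1 - a := by linarith
  constructor <;> nlinarith [hx i, hy i]

theorem isClosed_unitCube (d : ℕ) (v : Fin d → ℤ) : IsClosed (unitCube d v) := by
  simp only [unitCube, ofPred_forall, ofPred_and]
  exact isClosed_iInter fun i => (isClosed_le (by fun_prop) (by fun_prop)).inter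
    (isClosed_le (by fun_prop) (by fun_prop))

/-- Existence of the normal projection `φ` from the level set
`{g = ℓ} ∩ B` of a quantitatively nondegenerate function `g` onto the level set of the
perturbed function `g + p`. -/
theorem statement_7 (d : ℕ) (hd : 1 ≤ d) :
    ∃ C : ℝ, 20 ≤ C ∧
      ∀ (w : Fin d → ℤ) (ℓ : ℝ) (g p : Euc d → ℝ),
        ContDiff ℝ 2 g → ContDiff ℝ 2 p →
        ∀ (A₀ A₁ A₂ : ℝ),
          0 < A₁ → A₁ < 1 → 1 ≤ A₂ → 0 < A₀ → A₀ < A₁ ^ 2 / (C * A₂) →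
          (∀ x ∈ unitCube d w, g x = ℓ → A₁ < ‖gradient g x‖) →
          (∀ x ∈ unitCube d w, ‖fderiv ℝ (fderiv ℝ g) x‖ < A₂) →
          (∀ x ∈ unitCube d w, max |p x| ‖gradient p x‖ < A₀) →
          (∀ x ∈ unitCube d w,
            Metric.infDist x (frontier (unitCube d w)) ≤ 2 * A₀ / A₁ → p x = 0) →
          ∃ (V : Set (Euc d)) (φ : Euc d → Euc d),
            (∃ U : Set (Euc d), IsOpen U ∧ V = U ∩ unitCube d w) ∧
            {x | g x = ℓ} ∩ unitCube d w ⊆ V ∧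
            (∀ x ∈ V, gradient g x ≠ 0) ∧
            Set.InjOn φ V ∧
            ContDiffOn ℝ 1 φ V ∧
            Set.MapsTo φ V (unitCube d w) ∧
            ∀ x ∈ V, ∃ r : ℝ, |r| ≤ 2 * A₀ / A₁ ∧
              φ x = x + r • (‖gradient g x‖⁻¹ • gradient g x) ∧
              g (φ x) + p (φ x) = g x := by
  refine ⟨20, le_rfl, fun w ℓ g p hg hp A₀ A₁ A₂ hA₁ hA₁' hA₂ hA₀ hA hlev hhess hpert hpf => ?_⟩
  have hBc := isClosed_unitCube d w
  have hB := convex_unitCube d w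
  have hK : 0 ≤ A₂ := by linarith
  have hR : 0 < 2 * A₀ / A₁ := by positivity
  have hRA : A₁ * (2 * A₀ / A₁) = 2 * A₀ := by field_simp
  have hprod : A₀ * A₂ < A₁ ^ 2 / 20 := by
    rw [lt_div_iff₀ (by positivity)] at hA
    linarith
  have hKR : A₂ * (2 * A₀ / A₁) ≤ A₁ / 10 := by
    rw [← mul_div_assoc, div_le_iff₀ hA₁]
    nlinarith
  have hA₀' : A₀ ≤ A₁ / 20 := by nlinarith
  have hbound : ∀ x ∈ unitCube d w, ‖fderiv ℝ (fderiv ℝ g) x‖ ≤ A₂ := fun x hx => (hhess x hx).le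
  have hp0 : ∀ x ∈ unitCube d w, |p x| ≤ A₀ := fun x hx =>
    (le_max_left _ _).trans (hpert x hx).le
  have hp' : ∀ x ∈ unitCube d w, ‖fderiv ℝ p x‖ ≤ A₀ := fun x hx =>
    norm_gradient p x ▸ (le_max_right _ _).trans (hpert x hx).le
  have hroot : ∀ x, ∃ r : ℝ, x ∈ unitCube d w → A₁ < ‖gradient g x‖ →
      |r| ≤ 2 * A₀ / A₁ ∧ x + r • unitNormal g x ∈ unitCube d w ∧
        (g + p) (x + r • unitNormal g x) = g x := fun x => by
    by_cases h : x ∈ unitCube d w ∧ A₁ < ‖gradient g x‖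
    · obtain ⟨r, hr⟩ := exists_root_along_unitNormal hBc hB hg hp.continuous hK hbound hA₁ hR.le
        hKR hRA hp0 hpf h.1 h.2
      exact ⟨r, fun _ _ => hr⟩
    · exact ⟨0, fun h1 h2 => absurd ⟨h1, h2⟩ h⟩
  choose ρ hρ using hroot
  have hgrad : ∀ x, A₁ < ‖gradient g x‖ → gradient g x ≠ 0 := fun x hx =>
    norm_pos_iff.1 (hA₁.trans hx)
  refine ⟨{x | A₁ < ‖gradient g x‖} ∩ unitCube d w, fun x => x + ρ x • unitNormal g x,
    ⟨_, isOpen_lt continuous_const (contDiff_gradient hg).continuous.norm, rfl⟩,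
    fun x hx => ⟨hlev x hx.2 hx.1, hx.2⟩, fun x hx => hgrad x hx.1, ?_, ?_,
    fun x hx => (hρ x hx.2 hx.1).2.1,
    fun x hx => ⟨ρ x, (hρ x hx.2 hx.1).1, rfl, (hρ x hx.2 hx.1).2.2⟩⟩
  · rintro x ⟨hgx, hx⟩ y ⟨hgy, hy⟩ hxy
    obtain ⟨hrx, -, hx'⟩ := hρ x hx hgx
    obtain ⟨hry, -, hy'⟩ := hρ y hy hgy
    exact eq_of_add_smul_unitNormal_eq hB hg hK hbound hA₁ hKR hx hy hgx hgy
      (hx'.symm.trans ((congrArg (g + p) hxy).trans hy')) hrx hry hxy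
  · exact contDiffOn_id.add ((contDiffOn_root_along_unitNormal hBc hB hg (hp.of_le one_le_two) hK
      hbound hp' hA₁ hR hRA hKR hA₀' hp0 hpf hρ).smul fun x hx =>
        (contDiffAt_unitNormal hg (hgrad x hx.1)).contDiffWithinAt)

end
end
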